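/- Let M be a compact positive linear operator on L¹(π) for a probability measure π, and let h ∈ L¹(π) satisfy h > 0 π-almost everywhere. Then lim_{n→∞} ‖Mⁿh‖^{1/n} = r(M), the spectral radius of M. -/

import Mathlib

open MeasureTheory Filter
open scoped Topology ENNReal

/-!
The bound `limsup ‖Mⁿh‖^{1/n} ≤ r` is immediate. For the lower bound, compactness and Dini's theorem
make `g ⊓ N • h → g` uniform for `g ≥ 0` in the image of the unit ball, which gives, for every
`s > 0`, a constant `D` with
`‖M^{n+1}‖ ≤ D ‖Mⁿh‖ + s ‖Mⁿ‖` for all `n`.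
Fix `0 < s < r < t`. Iterating `k` times, with `‖M^{n+j}h‖ ≤ ‖M^j‖ ‖Mⁿh‖ = O(t^j) ‖Mⁿh‖`, yields
`‖M^{n+k}‖ ≤ C t^k ‖Mⁿh‖ + s^k ‖Mⁿ‖`. At `k = n` the left side grows like `r^{2n}`, which beats
both `s^n ‖Mⁿ‖` and `t^n s^n` when `t` is close enough to `r`; hence `‖Mⁿh‖ > s^n` eventually.
-/

section RootGrowth

variable {a b : ℕ → ℝ} {r s t : ℝ}

theorem tendsto_root_iff_forall_pow_lt (ha : ∀ n, 0 ≤ a n) (hr : 0 ≤ r) :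
    Tendsto (fun n : ℕ => a n ^ (1 / (n : ℝ))) atTop (𝓝 r) ↔
      (∀ s, 0 < s → s < r → ∀ᶠ n in atTop, s ^ n < a n) ∧
        ∀ t, r < t → ∀ᶠ n in atTop, a n < t ^ n := by
  have hlower {s : ℝ} (hs : 0 ≤ s) :
      (∀ᶠ n : ℕ in atTop, s < a n ^ (1 / (n : ℝ))) ↔ ∀ᶠ n in atTop, s ^ n < a n := by
    refine eventually_congr ?_
    filter_upwards [eventually_gt_atTop 0] with n hn
    rw [one_div, Real.lt_rpow_inv_iff_of_pos hs (ha n) (Nat.cast_pos.mpr hn), Real.rpow_natCast]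
  have hupper {t : ℝ} (ht : 0 ≤ t) :
      (∀ᶠ n : ℕ in atTop, a n ^ (1 / (n : ℝ)) < t) ↔ ∀ᶠ n in atTop, a n < t ^ n := by
    refine eventually_congr ?_
    filter_upwards [eventually_gt_atTop 0] with n hn
    rw [one_div, Real.rpow_inv_lt_iff_of_pos (ha n) ht (Nat.cast_pos.mpr hn), Real.rpow_natCast]
  rw [tendsto_order]
  refine ⟨fun h => ⟨fun s hs hsr => (hlower hs.le).mp (h.1 s hsr),
    fun t ht => (hupper (hr.trans ht.le)).mp (h.2 t ht)⟩,
    fun h => ⟨fun s hsr => ?_, fun t ht => (hupper (hr.trans ht.le)).mpr (h.2 t ht)⟩⟩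
  rcases lt_or_ge s 0 with hs | hs
  · exact .of_forall fun n => hs.trans_le (Real.rpow_nonneg (ha n) _)
  · obtain ⟨s', hss', hs'r⟩ := exists_between hsr
    have hs' : 0 < s' := hs.trans_lt hss'
    exact ((hlower hs'.le).mpr (h.1 s' hs' hs'r)).mono fun n => hss'.trans

theorem eventually_const_mul_pow_lt_pow (hs : 0 ≤ s) (hst : s < t) (C : ℝ) :
    ∀ᶠ n : ℕ in atTop, C * s ^ n < t ^ n := by
  have hlim : Tendsto (fun n : ℕ => C * (s / t) ^ n) atTop (𝓝 0) := by
    simpa only [mul_zero] using (tendsto_pow_atTop_nhds_zero_of_lt_one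
      (div_nonneg hs (hs.trans hst.le)) ((div_lt_one (hs.trans_lt hst)).mpr hst)).const_mul C
  filter_upwards [hlim.eventually_lt_const one_pos] with n hn
  rwa [div_pow, ← mul_div_assoc, div_lt_one (pow_pos (hs.trans_lt hst) n)] at hn

theorem exists_forall_le_mul_pow (ha : ∀ n, 0 ≤ a n) (ht : 0 < t)
    (hat : ∀ᶠ n in atTop, a n < t ^ n) : ∃ K > 0, ∀ n, a n ≤ K * t ^ n := by
  have hO : a =O[atTop] fun n => t ^ n := .of_bound 1 <| by
    filter_upwards [hat] with n hn
    rw [one_mul, Real.norm_of_nonneg (ha n), Real.norm_of_nonneg (by positivity)]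
    exact hn.le
  obtain ⟨K, hK, hle⟩ := Asymptotics.bound_of_isBigO_nat_atTop hO
  refine ⟨K, hK, fun n => (Real.le_norm_self _).trans ((hle (pow_pos ht n).ne').trans_eq ?_)⟩
  rw [Real.norm_of_nonneg (by positivity)]

theorem le_mul_pow_add_pow_mul_of_recurrence {D K : ℝ} (hs : 0 ≤ s) (hst : s < t) (hD : 0 ≤ D)
    (hK : 0 ≤ K) (hb : ∀ n, 0 ≤ b n) (hrec : ∀ n, a (n + 1) ≤ D * b n + s * a n)
    (hgrowth : ∀ n k, b (n + k) ≤ K * t ^ k * b n) (n k : ℕ) :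
    a (n + k) ≤ D * K / (t - s) * t ^ k * b n + s ^ k * a n := by
  have hts : 0 < t - s := sub_pos.mpr hst
  set C := D * K / (t - s)
  have hDK : D * K = C * (t - s) := (div_mul_cancel₀ _ hts.ne').symm
  induction k with
  | zero =>
    have : 0 ≤ C * b n := mul_nonneg (by positivity) (hb n)
    simpa only [add_zero, pow_zero, mul_one, one_mul, le_add_iff_nonneg_left] using this
  | succ k ih =>
    calc a (n + k + 1) ≤ D * b (n + k) + s * a (n + k) := hrec _
      _ ≤ D * (K * t ^ k * b n) + s * (C * t ^ k * b n + s ^ k * a n) := by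
        gcongr
        exact hgrowth n k
      _ = D * K * (t ^ k * b n) + s * (C * t ^ k * b n + s ^ k * a n) := by ring
      _ = C * t ^ (k + 1) * b n + s ^ (k + 1) * a n := by rw [hDK]; ring

/-- `v` and `t` are so close to `r` that `v²ⁿ`, a lower bound for `a (2 * n)`, outgrows `(s t)ⁿ`. -/
theorem exists_lt_lt_mul_lt_sq (hs : 0 < s) (hsr : s < r) :
    ∃ v t, 0 < v ∧ v < r ∧ r < t ∧ s * t < v ^ 2 := by
  have hr : 0 < r := hs.trans hsr
  obtain ⟨v, hv, hvr⟩ : ∃ v, √(s * r) < v ∧ v < r :=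
    exists_between ((Real.sqrt_lt' hr).mpr (by nlinarith))
  have hv0 : 0 < v := (Real.sqrt_nonneg _).trans_lt hv
  obtain ⟨t, hrt, ht⟩ : ∃ t, r < t ∧ t < v ^ 2 / s :=
    exists_between ((lt_div_iff₀' hs).mpr ((Real.sqrt_lt' hv0).mp hv))
  exact ⟨v, t, hv0, hvr, hrt, (lt_div_iff₀' hs).mp ht⟩

theorem eventually_pow_lt_of_recurrence {D : ℝ} (ha : ∀ n, 0 ≤ a n) (hb : ∀ n, 0 ≤ b n)
    (har : Tendsto (fun n : ℕ => a n ^ (1 / (n : ℝ))) atTop (𝓝 r))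
    (hmul : ∀ n k, b (n + k) ≤ a k * b n) (hs : 0 < s) (hsr : s < r) (hD : 0 ≤ D)
    (hrec : ∀ n, a (n + 1) ≤ D * b n + s * a n) : ∀ᶠ n in atTop, s ^ n < b n := by
  have hr : 0 < r := hs.trans hsr
  obtain ⟨hlower, hupper⟩ := (tendsto_root_iff_forall_pow_lt ha hr.le).mp har
  obtain ⟨v, t, hv, hvr, hrt, hstv⟩ := exists_lt_lt_mul_lt_sq hs hsr
  have ht : 0 < t := hr.trans hrt
  have hts : 0 < t - s := sub_pos.mpr (hsr.trans hrt)
  obtain ⟨K, hK, haK⟩ := exists_forall_le_mul_pow ha ht (hupper t hrt)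
  set C := D * K / (t - s)
  have hbound (n : ℕ) : a (n + n) ≤ C * t ^ n * b n + s ^ n * a n :=
    le_mul_pow_add_pow_mul_of_recurrence hs.le (hsr.trans hrt) hD hK.le hb hrec
      (fun n k => (hmul n k).trans (mul_le_mul_of_nonneg_right (haK k) (hb n))) n n
  have hdouble : Tendsto (fun n : ℕ => n + n) atTop atTop := tendsto_id.atTop_add_atTop tendsto_id
  filter_upwards [hdouble.eventually (hlower v hv hvr),
    eventually_const_mul_pow_lt_pow (by positivity) hstv (C + K)] with n hvn hsvn
  have hcompare : C * t ^ n * s ^ n < C * t ^ n * b n := by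
    have : (C + K) * (s * t) ^ n < C * t ^ n * b n + s ^ n * (K * t ^ n) :=
      calc (C + K) * (s * t) ^ n < (v ^ 2) ^ n := hsvn
        _ = v ^ (n + n) := by rw [← pow_mul, two_mul]
        _ ≤ C * t ^ n * b n + s ^ n * a n := hvn.le.trans (hbound n)
        _ ≤ C * t ^ n * b n + s ^ n * (K * t ^ n) := by gcongr; exact haK n
    rw [mul_pow] at this
    linarith
  exact lt_of_mul_lt_mul_left hcompare (by positivity)

theorem tendsto_root_of_recurrence (ha : ∀ n, 0 ≤ a n) (hb : ∀ n, 0 ≤ b n)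
    (har : Tendsto (fun n : ℕ => a n ^ (1 / (n : ℝ))) atTop (𝓝 r))
    (hmul : ∀ n k, b (n + k) ≤ a k * b n)
    (hrec : ∀ s > 0, ∃ D ≥ 0, ∀ n, a (n + 1) ≤ D * b n + s * a n) :
    Tendsto (fun n : ℕ => b n ^ (1 / (n : ℝ))) atTop (𝓝 r) := by
  have hr : 0 ≤ r := ge_of_tendsto' har fun n => Real.rpow_nonneg (ha n) _
  refine (tendsto_root_iff_forall_pow_lt hb hr).mpr ⟨fun s hs hsr => ?_, fun t hrt => ?_⟩
  · obtain ⟨D, hD, hrecD⟩ := hrec s hs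
    exact eventually_pow_lt_of_recurrence ha hb har hmul hs hsr hD hrecD
  · obtain ⟨u, hru, hut⟩ := exists_between hrt
    filter_upwards [((tendsto_root_iff_forall_pow_lt ha hr).mp har).2 u hru,
      eventually_const_mul_pow_lt_pow (hr.trans hru.le) hut (b 0)] with n han hun
    calc b n ≤ a n * b 0 := by simpa only [zero_add] using hmul 0 n
      _ ≤ u ^ n * b 0 := mul_le_mul_of_nonneg_right han.le (hb 0)
      _ < t ^ n := by rwa [mul_comm]

end RootGrowth

theorem norm_le_norm_of_nonneg_of_le {F : Type*} [NormedAddCommGroup F] [Lattice F]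
    [HasSolidNorm F] [IsOrderedAddMonoid F] {x y : F} (hx : 0 ≤ x) (hxy : x ≤ y) : ‖x‖ ≤ ‖y‖ :=
  norm_le_norm_of_abs_le_abs (abs_le_abs_of_nonneg hx hxy)

section MonotoneOperator

variable {E F : Type*} [NormedAddCommGroup E] [Lattice E] [NormedSpace ℝ E]
  [NormedAddCommGroup F] [Lattice F] [HasSolidNorm F] [IsOrderedAddMonoid F] [NormedSpace ℝ F]

theorem norm_map_le_norm_map_abs_of_monotone {T : E →L[ℝ] F} (hT : Monotone T) (f : E) :
    ‖T f‖ ≤ ‖T |f|‖ := by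
  rw [← norm_abs_eq_norm (T f)]
  refine norm_le_norm_of_nonneg_of_le (abs_nonneg _) (abs_le'.mpr ⟨hT (le_abs_self f), ?_⟩)
  rw [← map_neg]
  exact hT (neg_le_abs f)

theorem norm_map_le_of_norm_sub_inf_nsmul_le [IsOrderedAddMonoid E] {T : E →L[ℝ] F}
    (hT : Monotone T) {g h : E} (hg : 0 ≤ g) (hh : 0 ≤ h) {N : ℕ} {ε : ℝ}
    (hgh : ‖g - g ⊓ N • h‖ ≤ ε) : ‖T g‖ ≤ N * ‖T h‖ + ε * ‖T‖ := by
  have htrunc : ‖T (g ⊓ N • h)‖ ≤ N * ‖T h‖ :=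
    calc ‖T (g ⊓ N • h)‖ ≤ ‖T (N • h)‖ := norm_le_norm_of_nonneg_of_le
          (by simpa only [map_zero] using hT (le_inf hg (nsmul_nonneg hh N))) (hT inf_le_right)
      _ ≤ N * ‖T h‖ := by rw [map_nsmul]; exact norm_nsmul_le
  calc ‖T g‖ = ‖T (g ⊓ N • h) + T (g - g ⊓ N • h)‖ := by rw [← map_add, add_sub_cancel]
    _ ≤ ‖T (g ⊓ N • h)‖ + ‖T (g - g ⊓ N • h)‖ := norm_add_le _ _
    _ ≤ N * ‖T h‖ + ε * ‖T‖ := by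
      rw [mul_comm ε]
      exact add_le_add htrunc (T.le_opNorm_of_le hgh)

end MonotoneOperator

section QuasiInteriorPoint

variable {E : Type*} [NormedAddCommGroup E] [Lattice E]

/-- A quasi-interior point of the positive cone of a normed lattice. We encode the density of the
order ideal generated by `h` by the equivalent condition that every `g ≥ 0` is the norm limit of
its truncations `g ⊓ n • h`. -/
structure IsQuasiInteriorPoint (h : E) : Prop where
  nonneg : 0 ≤ h
  tendsto_inf_nsmul : ∀ g : E, 0 ≤ g → Tendsto (fun n : ℕ => g ⊓ n • h) atTop (𝓝 g)

variable [HasSolidNorm E] [IsOrderedAddMonoid E]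

theorem IsQuasiInteriorPoint.exists_norm_sub_inf_nsmul_lt {h : E} (hh : IsQuasiInteriorPoint h)
    {K : Set E} (hK : IsCompact K) {ε : ℝ} (hε : 0 < ε) :
    ∃ N : ℕ, ∀ g ∈ K, 0 ≤ g → ‖g - g ⊓ N • h‖ < ε := by
  have hunif : TendstoUniformlyOn (fun (n : ℕ) (g : E) => g ⊓ n • h) id atTop (K ∩ Set.Ici 0) :=
    Monotone.tendstoUniformlyOn_of_forall_tendsto (hK.inter_right isClosed_Ici)
      (fun n => by fun_prop)
      (fun g _ m n hmn => inf_le_inf_left g (nsmul_le_nsmul_left hh.nonneg hmn))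
      continuousOn_id fun g hg => hh.tendsto_inf_nsmul g hg.2
  obtain ⟨N, hN⟩ := (Metric.tendstoUniformlyOn_iff.mp hunif ε hε).exists
  exact ⟨N, fun g hgK hg => by simpa only [id, dist_eq_norm] using hN g ⟨hgK, hg⟩⟩

variable [NormedSpace ℝ E]

theorem IsQuasiInteriorPoint.exists_norm_pow_succ_le {h : E} (hh : IsQuasiInteriorPoint h)
    {M : E →L[ℝ] E} (hcompact : IsCompactOperator M) (hmono : Monotone M) {ε : ℝ} (hε : 0 < ε) :
    ∃ D ≥ 0, ∀ n : ℕ, ‖M ^ (n + 1)‖ ≤ D * ‖(M ^ n) h‖ + ε * ‖M ^ n‖ := by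
  have hpow (n : ℕ) : Monotone (M ^ n) := by
    rw [FunLike.coe_pow_eq_iterate]
    exact hmono.iterate n
  obtain ⟨K, hK, hMK⟩ :=
    IsCompactOperator.image_closedBall_subset_compact (f := (M : E →ₗ[ℝ] E)) hcompact 1
  obtain ⟨N, hN⟩ := hh.exists_norm_sub_inf_nsmul_lt hK hε
  refine ⟨N, N.cast_nonneg, fun n => ContinuousLinearMap.opNorm_le_of_unit_norm (by positivity)
    fun f hf => ?_⟩
  have hMf : 0 ≤ M |f| := by simpa only [map_zero] using hmono (abs_nonneg f)
  have hMfK : M |f| ∈ K := hMK ⟨|f|, by simp [norm_abs_eq_norm, hf], rfl⟩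
  calc ‖(M ^ (n + 1)) f‖ ≤ ‖(M ^ (n + 1)) |f|‖ :=
        norm_map_le_norm_map_abs_of_monotone (hpow (n + 1)) f
    _ = ‖(M ^ n) (M |f|)‖ := by rw [pow_succ]; rfl
    _ ≤ N * ‖(M ^ n) h‖ + ε * ‖M ^ n‖ :=
      norm_map_le_of_norm_sub_inf_nsmul_le (hpow n) hMf hh.nonneg (hN _ hMfK hMf).le

theorem stmt_15_general {M : E →L[ℝ] E} (hcompact : IsCompactOperator M)
    (hpos : ∀ g, 0 ≤ g → 0 ≤ M g) {h : E} (hh : IsQuasiInteriorPoint h) {r : ℝ}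
    (hr : Tendsto (fun n : ℕ => ‖M ^ n‖ ^ (1 / (n : ℝ))) atTop (𝓝 r)) :
    Tendsto (fun n : ℕ => ‖(M ^ n) h‖ ^ (1 / (n : ℝ))) atTop (𝓝 r) := by
  have hmono : Monotone M := (monotone_iff_map_nonneg M).mpr hpos
  refine tendsto_root_of_recurrence (fun n => norm_nonneg _) (fun n => norm_nonneg _) hr
    (fun n k => ?_) fun ε hε => hh.exists_norm_pow_succ_le hcompact hmono hε
  rw [add_comm, pow_add]
  exact (M ^ k).le_opNorm _

end QuasiInteriorPoint

section Lp

variable {Ω : Type*} [MeasurableSpace Ω] {μ : Measure Ω} {p : ℝ≥0∞}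

theorem tendsto_eLpNorm_zero_of_dominated {E F : Type*} [NormedAddCommGroup E]
    [NormedAddCommGroup F] {f : ℕ → Ω → E} {g : Ω → F} (hp : p ≠ ∞)
    (hf : ∀ n, AEStronglyMeasurable (f n) μ) (hg : MemLp g p μ)
    (hfg : ∀ n, ∀ᵐ ω ∂μ, ‖f n ω‖ ≤ ‖g ω‖)
    (hlim : ∀ᵐ ω ∂μ, Tendsto (fun n => f n ω) atTop (𝓝 0)) :
    Tendsto (fun n => eLpNorm (f n) p μ) atTop (𝓝 0) := by
  rcases eq_or_ne p 0 with rfl | hp0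
  · simp only [eLpNorm_exponent_zero, tendsto_const_nhds]
  have hpos : 0 < p.toReal := ENNReal.toReal_pos hp0 hp
  have hintegral : Tendsto (fun n => ∫⁻ ω, ‖f n ω‖ₑ ^ p.toReal ∂μ) atTop (𝓝 0) := by
    rw [← lintegral_zero (μ := μ)]
    refine tendsto_lintegral_of_dominated_convergence' (fun ω => ‖g ω‖ₑ ^ p.toReal)
      (fun n => (hf n).enorm.pow_const _) (fun n => ?_)
      (lintegral_rpow_enorm_lt_top_of_eLpNorm_lt_top hp0 hp hg.2).ne ?_
    · filter_upwards [hfg n] with ω hω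
      exact ENNReal.rpow_le_rpow (enorm_le_iff_norm_le.mpr hω) hpos.le
    · filter_upwards [hlim] with ω hω
      simpa only [enorm_zero, ENNReal.zero_rpow_of_pos hpos] using hω.enorm.ennrpow_const p.toReal
  simp_rw [eLpNorm_eq_lintegral_rpow_enorm_toReal hp0 hp]
  simpa only [ENNReal.zero_rpow_of_pos (one_div_pos.mpr hpos)] using
    hintegral.ennrpow_const (1 / p.toReal)

theorem isQuasiInteriorPoint_of_ae_pos [Fact (1 ≤ p)] (hp : p ≠ ∞) {h : Lp ℝ p μ}
    (hh : ∀ᵐ ω ∂μ, 0 < h ω) : IsQuasiInteriorPoint h where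
  nonneg := (Lp.coeFn_nonneg h).mp (hh.mono fun _ hω => hω.le)
  tendsto_inf_nsmul g hg := by
    have hcoe : ∀ᵐ ω ∂μ, ∀ n : ℕ, (g ⊓ n • h : Lp ℝ p μ) ω = min (g ω) (n * h ω) := by
      refine ae_all_iff.mpr fun n => ?_
      rw [← Nat.cast_smul_eq_nsmul ℝ n h]
      filter_upwards [Lp.coeFn_inf g ((n : ℝ) • h), Lp.coeFn_smul (n : ℝ) h] with ω hinf hsmul
      rw [hinf, Pi.inf_apply, hsmul, Pi.smul_apply, smul_eq_mul]
    rw [Lp.tendsto_Lp_iff_tendsto_eLpNorm']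
    refine tendsto_eLpNorm_zero_of_dominated hp
      (fun n => (Lp.aestronglyMeasurable _).sub (Lp.aestronglyMeasurable _)) (Lp.memLp g)
      (fun n => ?_) ?_
    · filter_upwards [hcoe, hh, (Lp.coeFn_nonneg g).mpr hg] with ω hω hhω hgω
      have hmin : 0 ≤ min (g ω) (n * h ω) := le_min hgω (by positivity)
      rw [Pi.sub_apply, hω, norm_sub_rev, Real.norm_of_nonneg (sub_nonneg.mpr (min_le_left _ _)),
        Real.norm_of_nonneg hgω]
      exact sub_le_self _ hmin
    · filter_upwards [hcoe, hh] with ω hω hhω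
      refine tendsto_const_nhds.congr' ?_
      filter_upwards [(tendsto_natCast_atTop_atTop.atTop_mul_const hhω).eventually_ge_atTop (g ω)]
        with n hn
      rw [Pi.sub_apply, hω, min_eq_left hn, sub_self]

end Lp

/-- Local spectral radius theorem: for a compact positive linear operator `M` on
`L¹(π)` and `h ∈ L¹(π)` with `h > 0` a.e., `‖Mⁿh‖^{1/n} → r(M)`, where
`r(M) = lim ‖Mⁿ‖^{1/n}` is the spectral radius. -/
theorem stmt_15 {Ω : Type*} [MeasurableSpace Ω] (π : Measure Ω) [IsProbabilityMeasure π]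
    (M : Lp ℝ 1 π →L[ℝ] Lp ℝ 1 π)
    (hcompact : IsCompactOperator M)
    (hpos : ∀ g : Lp ℝ 1 π, 0 ≤ g → 0 ≤ M g)
    (h : Lp ℝ 1 π) (hh : ∀ᵐ ω ∂π, 0 < h ω)
    (r : ℝ) (hr : Tendsto (fun n : ℕ => ‖M ^ n‖ ^ (1 / (n : ℝ))) atTop (nhds r)) :
    Tendsto (fun n : ℕ => ‖(M ^ n) h‖ ^ (1 / (n : ℝ))) atTop (nhds r) :=
  stmt_15_general hcompact hpos (isQuasiInteriorPoint_of_ae_pos ENNReal.one_ne_top hh) hr
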